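/- arXiv:2009.12107 — 2 statements merged into one kernel-verified Lean document; each statement's English description precedes it below -/
import Mathlib

section
/- Let R be a commutative ring. For every matrix M ∈ M_4(R), the Suslin matrix M·M* has length equal to det M; that is, writing M·M* = S_2(v,w), one has v·wᵀ = det M (equivalently, (M·M*)·(M·M*)‾ = (det M)·I_4). -/
open Matrix

noncomputable section

/-- Reindexing equivalence `Fin (2 ^ n) ⊕ Fin (2 ^ n) ≃ Fin (2 ^ (n + 1))`. -/
def pow2Equiv (n : ℕ) : Fin (2 ^ n) ⊕ Fin (2 ^ n) ≃ Fin (2 ^ (n + 1)) :=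
  finSumFinEquiv.trans (finCongr (by rw [pow_succ]; ring))

/-- The Suslin matrix `S_n(v, w)` of size `2 ^ n` associated to `v, w : Fin (n+1) → R`. -/
def sus (R : Type) [CommRing R] : (n : ℕ) → (Fin (n + 1) → R) → (Fin (n + 1) → R) →
    Matrix (Fin (2 ^ n)) (Fin (2 ^ n)) R
  | 0, v, _ => v 0 • 1
  | n + 1, v, w =>
      Matrix.reindex (pow2Equiv n) (pow2Equiv n)
        (Matrix.fromBlocks (v 0 • 1) (sus R n (v ∘ Fin.succ) (w ∘ Fin.succ))
          (-(sus R n (w ∘ Fin.succ) (v ∘ Fin.succ))ᵀ) (w 0 • 1))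

/-- The conjugate Suslin matrix `S̄_n(v, w) = S_n(w, v)ᵀ`. -/
def susBar (R : Type) [CommRing R] (n : ℕ) (v w : Fin (n + 1) → R) :
    Matrix (Fin (2 ^ n)) (Fin (2 ^ n)) R :=
  (sus R n w v)ᵀ

/-- Suslin's matrices `J_n`. -/
def Jmat (R : Type) [CommRing R] : (n : ℕ) → Matrix (Fin (2 ^ n)) (Fin (2 ^ n)) R
  | 0 => 1
  | n + 1 =>
      if Even (n + 1) then
        Matrix.reindex (pow2Equiv n) (pow2Equiv n)
          (Matrix.fromBlocks (Jmat R n) 0 0 (-(Jmat R n)))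
      else
        Matrix.reindex (pow2Equiv n) (pow2Equiv n)
          (Matrix.fromBlocks 0 (Jmat R n) (-(Jmat R n)) 0)

/-- The involution `M ↦ M* = J_n · Mᵀ · J_nᵀ`. -/
def invol (R : Type) [CommRing R] (n : ℕ) (M : Matrix (Fin (2 ^ n)) (Fin (2 ^ n)) R) :
    Matrix (Fin (2 ^ n)) (Fin (2 ^ n)) R :=
  Jmat R n * Mᵀ * (Jmat R n)ᵀ

/-- `φ(v, w) = [[0, S_n(v,w)], [S̄_n(v,w), 0]]` (note the shift: vectors in `R^{n+1}`,
matrices of size `2 ^ (n + 1)`). -/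
def phiMat (R : Type) [CommRing R] (n : ℕ) (v w : Fin (n + 1) → R) :
    Matrix (Fin (2 ^ (n + 1))) (Fin (2 ^ (n + 1))) R :=
  Matrix.reindex (pow2Equiv n) (pow2Equiv n)
    (Matrix.fromBlocks 0 (sus R n v w) (susBar R n v w) 0)

/-- The set of Suslin matrices of size `2 ^ m`. -/
def SuslinSet (R : Type) [CommRing R] (m : ℕ) : Set (Matrix (Fin (2 ^ m)) (Fin (2 ^ m)) R) :=
  {S | ∃ v w : Fin (m + 1) → R, S = sus R m v w}

/-- The image of the hyperbolic space `R^{m+1} ⊕ R^{m+1}` inside the Clifford algebra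
`M_{2^{m+1}}(R)`. -/
def PhiSet (R : Type) [CommRing R] (m : ℕ) :
    Set (Matrix (Fin (2 ^ (m + 1))) (Fin (2 ^ (m + 1))) R) :=
  {x | ∃ v w : Fin (m + 1) → R, x = phiMat R m v w}

/-- The block diagonal matrix `diag(g₁, g₂)`. -/
def diagBlock (R : Type) [CommRing R] (m : ℕ)
    (g₁ g₂ : Matrix (Fin (2 ^ m)) (Fin (2 ^ m)) R) :
    Matrix (Fin (2 ^ (m + 1))) (Fin (2 ^ (m + 1))) R :=
  Matrix.reindex (pow2Equiv m) (pow2Equiv m) (Matrix.fromBlocks g₁ 0 0 g₂)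

/-- `Spin_{2(m+1)}(R)`, as the set of pairs `(g₁, g₂)` such that `x = diag(g₁, g₂)`
satisfies `x · x* = 1` and conjugation by `x` maps the image of the hyperbolic space
onto itself. -/
def SpinPair (R : Type) [CommRing R] (m : ℕ) :
    Set (Matrix (Fin (2 ^ m)) (Fin (2 ^ m)) R × Matrix (Fin (2 ^ m)) (Fin (2 ^ m)) R) :=
  {p | IsUnit p.1 ∧ IsUnit p.2 ∧
    diagBlock R m p.1 p.2 * invol R (m + 1) (diagBlock R m p.1 p.2) = 1 ∧
    (fun y => diagBlock R m p.1 p.2 * y * (diagBlock R m p.1 p.2)⁻¹) '' PhiSet R m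
      = PhiSet R m}

/-- The group `G_m(R)` of `g ∈ GL_{2^m}(R)` such that `g · S · g*` is a Suslin matrix
for every Suslin matrix `S`. -/
def GSet (R : Type) [CommRing R] (m : ℕ) : Set (Matrix (Fin (2 ^ m)) (Fin (2 ^ m)) R) :=
  {g | IsUnit g ∧ ∀ S ∈ SuslinSet R m, g * S * invol R m g ∈ SuslinSet R m}

/-- The group `SG_m(R)` of `g ∈ G_m(R)` preserving the length `l(S(v,w)) = v ⬝ᵥ w`. -/
def SGSet (R : Type) [CommRing R] (m : ℕ) : Set (Matrix (Fin (2 ^ m)) (Fin (2 ^ m)) R) :=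
  {g | g ∈ GSet R m ∧ ∀ v w v' w' : Fin (m + 1) → R,
    g * sus R m v w * invol R m g = sus R m v' w' → v' ⬝ᵥ w' = v ⬝ᵥ w}

/-- The hyperbolic quadratic form `q(v, w) = v ⬝ᵥ w` on `R^n ⊕ R^n`. -/
def hypForm (R : Type) [CommRing R] (n : ℕ) :
    QuadraticForm R ((Fin n → R) × (Fin n → R)) :=
  LinearMap.BilinMap.toQuadraticMap
    (LinearMap.mk₂ R (fun x y => x.1 ⬝ᵥ y.2)
      (fun x x' y => by simp [add_dotProduct])
      (fun c x y => by simp [smul_dotProduct])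
      (fun x y y' => by simp [dotProduct_add])
      (fun x c y => by simp [dotProduct_smul]))

/-- `E_i = S_m(e_i, 0)`. -/
def Emat (R : Type) [CommRing R] (m : ℕ) (i : Fin (m + 1)) :
    Matrix (Fin (2 ^ m)) (Fin (2 ^ m)) R :=
  sus R m (Pi.single i 1) 0

/-- `F_i = S_m(0, e_i)`. -/
def Fmat (R : Type) [CommRing R] (m : ℕ) (i : Fin (m + 1)) :
    Matrix (Fin (2 ^ m)) (Fin (2 ^ m)) R :=
  sus R m 0 (Pi.single i 1)

/-! Put `J = J_2`. The map `S ↦ S * J` is a bijection from Suslin matrices onto alternating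
`4 × 4` matrices, and it carries the length of `S` to minus the Pfaffian of `S * J`. Since
`J * Jᵀ = 1`, it turns `S ↦ M * S * M*` into the congruence `A ↦ M * A * Mᵀ`. Congruence by `M`
multiplies the Pfaffian by `det M`: the Pfaffian of the Gram matrix of four vectors for a fixed
alternating form is an alternating 4-linear form in these vectors, hence a multiple of the
determinant. The Suslin matrix `S = 1` has length `1`. -/

section Pfaffian

variable {R : Type*} [CommRing R]

/-- The Pfaffian of an alternating `4 × 4` matrix. The formula reads only the entries above the
diagonal, so it is meaningful for alternating `A` only. -/
def pfaffianFour (A : Matrix (Fin 4) (Fin 4) R) : R :=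
  A 0 1 * A 2 3 - A 0 2 * A 1 3 + A 0 3 * A 1 2

/-- The divided wedge square `(B ∧ B) / 2` of an alternating bilinear form `B`, as an alternating
`4`-linear form: the Pfaffian of the Gram matrix of four vectors. -/
def halfWedgeSquare {V : Type*} [AddCommGroup V] [Module R V] (B : LinearMap.BilinForm R V)
    (hB : B.IsAlt) : V [⋀^Fin 4]→ₗ[R] R where
  toFun x := pfaffianFour (of fun i j => B (x i) (x j))
  map_update_add' {inst} x i a b := by
    obtain rfl := Subsingleton.elim inst (instDecidableEqFin 4)
    simp only [pfaffianFour, of_apply, Function.update_apply]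
    fin_cases i <;>
      simp only [Fin.reduceFinMk, Fin.reduceEq, if_true, if_false, map_add, LinearMap.add_apply] <;>
      ring
  map_update_smul' {inst} x i c a := by
    obtain rfl := Subsingleton.elim inst (instDecidableEqFin 4)
    simp only [pfaffianFour, of_apply, Function.update_apply]
    fin_cases i <;>
      simp only [Fin.reduceFinMk, Fin.reduceEq, if_true, if_false, map_smul,
        LinearMap.smul_apply, smul_eq_mul] <;>
      ring
  map_eq_zero_of_eq' x i j hx hij := by
    have hself (k : Fin 4) : B (x k) (x k) = 0 := hB (x k)
    have hskew (k l : Fin 4) : -B (x k) (x l) = B (x l) (x k) :=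
      LinearMap.IsAlt.neg hB (x k) (x l)
    simp only [pfaffianFour, of_apply]
    fin_cases i <;> fin_cases j <;> grind

lemma isAlt_toBilin'_mul_mul_transpose {m n : Type*} [Fintype m] [DecidableEq m] [Fintype n]
    [DecidableEq n] (M : Matrix m n R) {A : Matrix n n R} (hA : (toBilin' A).IsAlt) :
    (toBilin' (M * A * Mᵀ)).IsAlt := by
  have hcomp : (toBilin' A).comp (toLin' Mᵀ) (toLin' Mᵀ) = toBilin' (M * A * Mᵀ) := by
    simpa using toBilin'_comp A Mᵀ Mᵀ
  rw [← hcomp]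
  exact fun x => hA (toLin' Mᵀ x)

lemma pfaffianFour_mul_mul_transpose (M : Matrix (Fin 4) (Fin 4) R) {A : Matrix (Fin 4) (Fin 4) R}
    (hA : (toBilin' A).IsAlt) : pfaffianFour (M * A * Mᵀ) = M.det * pfaffianFour A := by
  let ω := halfWedgeSquare (toBilin' A) hA
  have hM : ω M = pfaffianFour (M * A * Mᵀ) := by
    refine congrArg pfaffianFour (Matrix.ext fun i j => ?_)
    rw [mul_mul_apply, of_apply, toBilin'_apply', transpose_transpose]
  have hbasis : ω (Pi.basisFun R (Fin 4)) = pfaffianFour A := by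
    refine congrArg pfaffianFour (Matrix.ext fun i j => ?_)
    simp [toBilin'_single]
  have hω : ω = ω (Pi.basisFun R (Fin 4)) • detRowAlternating := by
    rw [← Pi.basisFun_det]
    exact ω.eq_smul_basis_det (Pi.basisFun R (Fin 4))
  calc pfaffianFour (M * A * Mᵀ) = ω M := hM.symm
    _ = ω (Pi.basisFun R (Fin 4)) * M.det := DFunLike.congr_fun hω M
    _ = M.det * pfaffianFour A := by rw [hbasis, mul_comm]

end Pfaffian

section Suslin

variable {R : Type} [CommRing R]

lemma Jmat_mul_transpose (n : ℕ) : Jmat R n * (Jmat R n)ᵀ = 1 := by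
  induction n with
  | zero => simp [Jmat]
  | succ n ih =>
    rw [Jmat]
    split_ifs <;> simp [fromBlocks_transpose, submatrix_mul_equiv, fromBlocks_multiply, ih]

lemma sus_zero (n : ℕ) : sus R n 0 0 = 0 := by
  induction n with
  | zero => simp [sus]
  | succ n ih => simp [sus, ih, Pi.zero_comp]

lemma sus_single_zero (n : ℕ) : sus R n (Pi.single 0 1) (Pi.single 0 1) = 1 := by
  cases n with
  | zero => simp [sus]
  | succ n =>
    have hsucc : (Pi.single 0 1 : Fin (n + 2) → R) ∘ Fin.succ = 0 := by
      ext i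
      simp
    simp [sus, hsucc, sus_zero]

lemma reindex_pow2Equiv_zero_fromBlocks {α : Type*}
    (A B C D : Matrix (Fin (2 ^ 0)) (Fin (2 ^ 0)) α) :
    reindex (pow2Equiv 0) (pow2Equiv 0) (fromBlocks A B C D) =
      (!![A 0 0, B 0 0; C 0 0, D 0 0] : Matrix (Fin 2) (Fin 2) α) := by
  ext i j
  change Fin 2 at i j
  fin_cases i <;> fin_cases j <;> rfl

lemma reindex_pow2Equiv_one_fromBlocks {α : Type*} (A B C D : Matrix (Fin 2) (Fin 2) α) :
    reindex (pow2Equiv 1) (pow2Equiv 1) (fromBlocks A B C D) =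
      (!![A 0 0, A 0 1, B 0 0, B 0 1; A 1 0, A 1 1, B 1 0, B 1 1;
        C 0 0, C 0 1, D 0 0, D 0 1; C 1 0, C 1 1, D 1 0, D 1 1] : Matrix (Fin 4) (Fin 4) α) := by
  ext i j
  change Fin 4 at i j
  fin_cases i <;> fin_cases j <;> rfl

lemma sus_one (v w : Fin 2 → R) :
    sus R 1 v w = (!![v 0, v 1; -w 1, w 0] : Matrix (Fin 2) (Fin 2) R) := by
  rw [sus, reindex_pow2Equiv_zero_fromBlocks]
  simp [sus]

lemma Jmat_one : Jmat R 1 = (!![0, 1; -1, 0] : Matrix (Fin 2) (Fin 2) R) := by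
  rw [Jmat, if_neg (by decide), reindex_pow2Equiv_zero_fromBlocks]
  simp [Jmat]

lemma sus_two_mul_Jmat_two (v w : Fin 3 → R) :
    sus R 2 v w * Jmat R 2 =
      (!![0, v 0, v 2, -v 1; -v 0, 0, w 1, w 2; -v 2, -w 1, 0, -w 0; v 1, -w 2, w 0, 0] :
        Matrix (Fin 4) (Fin 4) R) := by
  have hblocks : sus R 2 v w * Jmat R 2 = reindex (pow2Equiv 1) (pow2Equiv 1)
      (fromBlocks (v 0 • Jmat R 1) (-(sus R 1 (v ∘ Fin.succ) (w ∘ Fin.succ) * Jmat R 1))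
        (-((sus R 1 (w ∘ Fin.succ) (v ∘ Fin.succ))ᵀ * Jmat R 1)) (-(w 0 • Jmat R 1))) := by
    rw [sus, Jmat, if_pos (by decide)]
    simp [submatrix_mul_equiv, fromBlocks_multiply]
  rw [hblocks, sus_one, sus_one, Jmat_one]
  refine (reindex_pow2Equiv_one_fromBlocks _ _ _ _).trans ?_
  simp [mul_apply, Fin.sum_univ_two]

lemma isAlt_toBilin'_sus_two_mul_Jmat_two (v w : Fin 3 → R) :
    (toBilin' (sus R 2 v w * Jmat R 2)).IsAlt := by
  intro x
  rw [sus_two_mul_Jmat_two, toBilin'_apply']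
  simp only [Nat.reducePow, dotProduct, mulVec, Fin.sum_univ_four, of_apply, cons_val',
    cons_val_fin_one, cons_val]
  ring

lemma pfaffianFour_sus_two_mul_Jmat_two (v w : Fin 3 → R) :
    pfaffianFour (sus R 2 v w * Jmat R 2) = -(v ⬝ᵥ w) := by
  rw [sus_two_mul_Jmat_two]
  simp only [pfaffianFour, dotProduct, Fin.sum_univ_three, of_apply, cons_val', cons_val_fin_one,
    cons_val]
  ring

lemma exists_sus_two_mul_Jmat_two_eq {A : Matrix (Fin (2 ^ 2)) (Fin (2 ^ 2)) R}
    (hA : (toBilin' A).IsAlt) : ∃ v w : Fin 3 → R, sus R 2 v w * Jmat R 2 = A := by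
  have hself (i : Fin 4) : A i i = 0 := by
    simpa using hA (Pi.single i 1)
  have hskew (i j : Fin 4) : -A i j = A j i := by
    simpa using LinearMap.IsAlt.neg hA (Pi.single i 1) (Pi.single j 1)
  refine ⟨![A 0 1, -A 0 3, A 0 2], ![-A 2 3, A 1 2, A 1 3], ?_⟩
  rw [sus_two_mul_Jmat_two]
  ext i j
  change Fin 4 at i j
  fin_cases i <;> fin_cases j <;> simp [hself, hskew]

theorem length_MMstar_eq_det_general (M : Matrix (Fin (2 ^ 2)) (Fin (2 ^ 2)) R) (v w : Fin 3 → R) :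
    ∃ v' w' : Fin 3 → R, M * sus R 2 v w * invol R 2 M = sus R 2 v' w' ∧
      v' ⬝ᵥ w' = M.det * (v ⬝ᵥ w) := by
  have hA := isAlt_toBilin'_sus_two_mul_Jmat_two v w
  obtain ⟨v', w', h⟩ := exists_sus_two_mul_Jmat_two_eq (isAlt_toBilin'_mul_mul_transpose M hA)
  refine ⟨v', w', ?_, neg_injective ?_⟩
  · calc M * sus R 2 v w * invol R 2 M
        = M * (sus R 2 v w * Jmat R 2) * Mᵀ * (Jmat R 2)ᵀ := by simp only [invol, Matrix.mul_assoc]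
      _ = sus R 2 v' w' * (Jmat R 2 * (Jmat R 2)ᵀ) := by rw [← h, Matrix.mul_assoc]
      _ = sus R 2 v' w' := by rw [Jmat_mul_transpose, Matrix.mul_one]
  · calc -(v' ⬝ᵥ w')
        = pfaffianFour (M * (sus R 2 v w * Jmat R 2) * Mᵀ) := by
          rw [← h, pfaffianFour_sus_two_mul_Jmat_two]
      _ = M.det * -(v ⬝ᵥ w) := by
          rw [pfaffianFour_mul_mul_transpose M hA, pfaffianFour_sus_two_mul_Jmat_two]
      _ = -(M.det * (v ⬝ᵥ w)) := mul_neg _ _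

end Suslin

/-- for every `M ∈ M_4(R)`, the Suslin matrix `M·M*` has length `det M`:
`M·M* = S_2(v, w)` with `v ⬝ᵥ w = det M`. -/
theorem length_MMstar_eq_det (R : Type) [CommRing R]
    (M : Matrix (Fin (2 ^ 2)) (Fin (2 ^ 2)) R) :
    ∃ v w : Fin 3 → R, M * invol R 2 M = sus R 2 v w ∧ v ⬝ᵥ w = M.det := by
  simpa [sus_single_zero] using length_MMstar_eq_det_general M (Pi.single 0 1) (Pi.single 0 1)
end
end

section
/- Let R be a commutative ring, n ≥ 3 odd, and let E_i := S_{n-1}(e_i, 0) and F_i := S_{n-1}(0, e_i) in M_{2^{n-1}}(R), where e_1, …, e_n is the standard basis of R^n. Then for all a ∈ R and all indices i, j with 2 ≤ i, j ≤ n and i ≠ j, the matrices I + a·E_iE_1 and I + E_1E_j are invertible and one has the commutator relations I + a·E_iE_j = [I + a·E_iE_1, I + E_1E_j] and I + a·F_iF_j = [I + a·F_iF_1, I + F_1F_j], where [x, y] := x·y·x^{−1}·y^{−1}. -/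
open Matrix

noncomputable section

/-!
The matrix `S = S_m(v, w)` and its conjugate `S̄` satisfy `S + S̄ = (v₀ + w₀) I` and
`S S̄ = (v ⬝ w) I`, so `S` is a root of `T² - (v₀ + w₀) T + v ⬝ w`. Polarizing this on a totally
isotropic subspace gives `S S' + S' S = (v₀ + w₀) S' + (v'₀ + w'₀) S`. Hence `E₁` is idempotent,
while the `E_i` with `i ≠ 1` square to zero, anticommute and satisfy `E₁ E_i + E_i E₁ = E_i`; the
same holds for the `F_i`. The commutator formula is a consequence of these relations in any ring.
-/

section PeirceHalf

variable {A : Type*} [Ring A] {p x y : A}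

/-- `x` lies in the Peirce `1/2`-space of `p`: for idempotent `p`, it is off-diagonal in the
decomposition `1 = p + (1 - p)`. The condition is scaled by two, so that `2` need not be
invertible. For `p = E₁` this is how the matrices `E_i` with `i ≠ 1` enter. -/
def IsPeirceHalf (p x : A) : Prop :=
  p * x + x * p = x

theorem IsPeirceHalf.mul_eq_mul_one_sub (hx : IsPeirceHalf p x) : p * x = x * (1 - p) := by
  rw [mul_sub, mul_one]
  exact eq_sub_of_add_eq hx

theorem IsPeirceHalf.smul {S : Type*} [Monoid S] [DistribMulAction S A] [IsScalarTower S A A]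
    [SMulCommClass S A A] (hx : IsPeirceHalf p x) (a : S) : IsPeirceHalf p (a • x) := by
  rw [IsPeirceHalf, mul_smul_comm, smul_mul_assoc, ← smul_add, hx]

theorem IsPeirceHalf.mul_mul_self_eq_zero (hp : IsIdempotentElem p) (hx : IsPeirceHalf p x) :
    p * x * p = 0 := by
  rw [hx.mul_eq_mul_one_sub, mul_assoc, hp.one_sub_mul_self, mul_zero]

theorem IsPeirceHalf.commute_mul (hx : IsPeirceHalf p x) (hy : IsPeirceHalf p y) :
    Commute p (x * y) :=
  calc p * (x * y) = x * (y - p * y) := by rw [← mul_assoc, hx.mul_eq_mul_one_sub]; noncomm_ring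
    _ = x * y * p := by rw [hy.mul_eq_mul_one_sub]; noncomm_ring

theorem IsPeirceHalf.mul_right_mul_self_eq_zero (hp : IsIdempotentElem p) (hx : IsPeirceHalf p x) :
    x * p * (x * p) = 0 := by
  rw [mul_assoc, ← mul_assoc p, hx.mul_mul_self_eq_zero hp, mul_zero]

theorem IsPeirceHalf.mul_left_mul_self_eq_zero (hp : IsIdempotentElem p) (hx : IsPeirceHalf p x) :
    p * x * (p * x) = 0 := by
  rw [← mul_assoc, hx.mul_mul_self_eq_zero hp, zero_mul]

theorem IsPeirceHalf.mul_sub_mul_eq_mul (hp : IsIdempotentElem p) (hx : IsPeirceHalf p x)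
    (hy : IsPeirceHalf p y) (hxy : x * y + y * x = 0) :
    x * p * (p * y) - p * y * (x * p) = x * y := by
  have h₁ : x * p * (p * y) = x * y * (1 - p) := by
    rw [mul_assoc, hp.mul_self_mul, hy.mul_eq_mul_one_sub, mul_assoc]
  have h₂ : p * y * (x * p) = -(x * y * p) :=
    calc p * y * (x * p) = p * (y * x) * p := by noncomm_ring
      _ = -(x * y * p) := by
        rw [(hy.commute_mul hx).eq, mul_assoc, hp.eq, eq_neg_of_add_eq_zero_right hxy, neg_mul]
  rw [h₁, h₂]
  noncomm_ring

theorem IsPeirceHalf.mul_right_sandwich_eq_zero (hp : IsIdempotentElem p) (hx : IsPeirceHalf p x)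
    (hy : IsPeirceHalf p y) (hxx : x * x = 0) (hxy : x * y + y * x = 0) :
    x * p * (p * y) * (x * p) = 0 :=
  calc x * p * (p * y) * (x * p) = x * ((p * p) * (y * x)) * p := by noncomm_ring
    _ = x * (y * x) * p := by
      rw [hp.eq, (hy.commute_mul hx).eq, ← mul_assoc, mul_assoc _ p, hp.eq]
    _ = -(x * x * y * p) := by rw [eq_neg_of_add_eq_zero_right hxy]; noncomm_ring
    _ = 0 := by simp [hxx]

theorem IsPeirceHalf.mul_left_sandwich_eq_zero (hp : IsIdempotentElem p) (hx : IsPeirceHalf p x)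
    (hy : IsPeirceHalf p y) (hyy : y * y = 0) (hxy : x * y + y * x = 0) :
    p * y * (x * p) * (p * y) = 0 :=
  calc p * y * (x * p) * (p * y) = p * (y * x * (p * p)) * y := by noncomm_ring
    _ = p * (y * x) * y := by
      rw [hp.eq, ← (hy.commute_mul hx).eq, hp.mul_self_mul]
    _ = -(p * x * (y * y)) := by rw [eq_neg_of_add_eq_zero_right hxy]; noncomm_ring
    _ = 0 := by simp [hyy]

theorem one_add_commutator_mul {u v : A} (hu : u * u = 0) (hv : v * v = 0)
    (huvu : u * v * u = 0) (hvuv : v * u * v = 0) :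
    (1 + (u * v - v * u)) * (1 + v) * (1 + u) = (1 + u) * (1 + v) :=
  calc (1 + (u * v - v * u)) * (1 + v) * (1 + u)
      = (1 + u) * (1 + v) + (u * v * u - v * (u * u) + (u * (v * v) - v * u * v) * (1 + u)) := by
        noncomm_ring
    _ = (1 + u) * (1 + v) := by simp [hu, hv, huvu, hvuv]

theorem IsPeirceHalf.one_add_mul_commutator (hp : IsIdempotentElem p) (hx : IsPeirceHalf p x)
    (hy : IsPeirceHalf p y) (hxx : x * x = 0) (hyy : y * y = 0) (hxy : x * y + y * x = 0) :
    (1 + x * y) * (1 + p * y) * (1 + x * p) = (1 + x * p) * (1 + p * y) := by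
  rw [← one_add_commutator_mul (hx.mul_right_mul_self_eq_zero hp) (hy.mul_left_mul_self_eq_zero hp)
    (hx.mul_right_sandwich_eq_zero hp hy hxx hxy) (hx.mul_left_sandwich_eq_zero hp hy hyy hxy),
    hx.mul_sub_mul_eq_mul hp hy hxy]

theorem IsPeirceHalf.isUnit_one_add_mul_right (hp : IsIdempotentElem p)
    (hx : IsPeirceHalf p x) : IsUnit (1 + x * p) :=
  IsNilpotent.isUnit_one_add ⟨2, by rw [sq, hx.mul_right_mul_self_eq_zero hp]⟩

theorem IsPeirceHalf.isUnit_one_add_mul_left (hp : IsIdempotentElem p)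
    (hx : IsPeirceHalf p x) : IsUnit (1 + p * x) :=
  IsNilpotent.isUnit_one_add ⟨2, by rw [sq, hx.mul_left_mul_self_eq_zero hp]⟩

end PeirceHalf

theorem eq_mul_mul_inv_mul_inv_of_mul_mul_eq {N R : Type*} [Fintype N] [DecidableEq N]
    [CommRing R] {C X Y : Matrix N N R} (hX : IsUnit X) (hY : IsUnit Y)
    (h : C * Y * X = X * Y) : C = X * Y * X⁻¹ * Y⁻¹ := by
  rw [← h, mul_nonsing_inv_cancel_right X _ ((isUnit_iff_isUnit_det X).mp hX),
    mul_nonsing_inv_cancel_right Y _ ((isUnit_iff_isUnit_det Y).mp hY)]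

section Suslin

variable {R : Type} [CommRing R]

theorem sus_succ (n : ℕ) (v w : Fin (n + 2) → R) :
    sus R (n + 1) v w = reindexAlgEquiv R R (pow2Equiv n)
      (fromBlocks (v 0 • 1) (sus R n (v ∘ Fin.succ) (w ∘ Fin.succ))
        (-susBar R n (v ∘ Fin.succ) (w ∘ Fin.succ)) (w 0 • 1)) :=
  rfl

theorem susBar_succ (n : ℕ) (v w : Fin (n + 2) → R) :
    susBar R (n + 1) v w = reindexAlgEquiv R R (pow2Equiv n)
      (fromBlocks (w 0 • 1) (-sus R n (v ∘ Fin.succ) (w ∘ Fin.succ))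
        (susBar R n (v ∘ Fin.succ) (w ∘ Fin.succ)) (v 0 • 1)) := by
  simp [susBar, sus, fromBlocks_transpose]

theorem sus_add (n : ℕ) (v w v' w' : Fin (n + 1) → R) :
    sus R n (v + v') (w + w') = sus R n v w + sus R n v' w' := by
  induction n with
  | zero => simp [sus, add_smul]
  | succ n ih =>
    simp only [sus_succ, susBar, Pi.add_comp, Pi.add_apply, ih, ← map_add, fromBlocks_add,
      transpose_add, neg_add, add_smul]

theorem sus_add_susBar (n : ℕ) (v w : Fin (n + 1) → R) :
    sus R n v w + susBar R n v w = (v 0 + w 0) • 1 := by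
  cases n with
  | zero => simp [sus, susBar, add_smul]
  | succ n =>
    rw [sus_succ, susBar_succ, ← map_add, fromBlocks_add, ← add_smul, ← add_smul,
      add_neg_cancel, neg_add_cancel, add_comm (w 0), ← map_one (reindexAlgEquiv R R (pow2Equiv n)),
      ← map_smul, ← fromBlocks_one, fromBlocks_smul, smul_zero]

theorem susBar_eq_sub (n : ℕ) (v w : Fin (n + 1) → R) :
    susBar R n v w = (v 0 + w 0) • 1 - sus R n v w :=
  eq_sub_of_add_eq' (sus_add_susBar n v w)

theorem commute_susBar_sus (n : ℕ) (v w : Fin (n + 1) → R) :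
    Commute (susBar R n v w) (sus R n v w) := by
  rw [susBar_eq_sub]
  exact ((Commute.one_left _).smul_left _).sub_left (Commute.refl _)

theorem sus_mul_susBar (n : ℕ) (v w : Fin (n + 1) → R) :
    sus R n v w * susBar R n v w = (v ⬝ᵥ w) • 1 := by
  induction n with
  | zero => simp [sus, susBar, dotProduct, smul_smul, mul_comm]
  | succ n ih =>
    have hdot : v ⬝ᵥ w = v 0 * w 0 + (v ∘ Fin.succ) ⬝ᵥ (w ∘ Fin.succ) := by
      simp [dotProduct, Fin.sum_univ_succ]
    rw [sus_succ, susBar_succ, ← map_mul, fromBlocks_multiply, neg_mul_neg, neg_mul,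
      (commute_susBar_sus n _ _).eq, ih, ← map_one (reindexAlgEquiv R R (pow2Equiv n)),
      ← map_smul, ← fromBlocks_one, fromBlocks_smul, hdot]
    simp [smul_smul, add_smul, mul_comm, add_comm]

theorem sus_mul_self (n : ℕ) (v w : Fin (n + 1) → R) :
    sus R n v w * sus R n v w = (v 0 + w 0) • sus R n v w - (v ⬝ᵥ w) • 1 := by
  rw [← sus_mul_susBar, susBar_eq_sub, mul_sub, mul_smul_comm, mul_one, sub_sub_cancel]

theorem sus_mul_sus_add_swap (n : ℕ) (v w v' w' : Fin (n + 1) → R) :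
    sus R n v w * sus R n v' w' + sus R n v' w' * sus R n v w =
      (v 0 + w 0) • sus R n v' w' + (v' 0 + w' 0) • sus R n v w
        - (v ⬝ᵥ w' + v' ⬝ᵥ w) • 1 := by
  have h := sus_mul_self n (v + v') (w + w')
  rw [sus_add, add_mul, mul_add, mul_add, sus_mul_self n v w, sus_mul_self n v' w',
    add_dotProduct, dotProduct_add, dotProduct_add, Pi.add_apply, Pi.add_apply] at h
  rw [← sub_eq_zero] at h ⊢
  rw [← h]
  module

theorem sus_mul_sus_add_swap_of_isotropic {n : ℕ}
    {W : AddSubgroup ((Fin (n + 1) → R) × (Fin (n + 1) → R))} (hW : ∀ z ∈ W, z.1 ⬝ᵥ z.2 = 0)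
    {x y : (Fin (n + 1) → R) × (Fin (n + 1) → R)} (hx : x ∈ W) (hy : y ∈ W) :
    sus R n x.1 x.2 * sus R n y.1 y.2 + sus R n y.1 y.2 * sus R n x.1 x.2 =
      (x.1 0 + x.2 0) • sus R n y.1 y.2 + (y.1 0 + y.2 0) • sus R n x.1 x.2 := by
  have hxy : x.1 ⬝ᵥ y.2 + y.1 ⬝ᵥ x.2 = 0 := by
    simpa [add_dotProduct, dotProduct_add, hW x hx, hW y hy, add_comm] using
      hW (x + y) (W.add_mem hx hy)
  rw [sus_mul_sus_add_swap, hxy, zero_smul, sub_zero]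

theorem sus_commutator_of_isotropic {n : ℕ}
    {W : AddSubgroup ((Fin (n + 1) → R) × (Fin (n + 1) → R))} (hW : ∀ z ∈ W, z.1 ⬝ᵥ z.2 = 0)
    {e x y : (Fin (n + 1) → R) × (Fin (n + 1) → R)} (he : e ∈ W) (hx : x ∈ W) (hy : y ∈ W)
    (he₀ : e.1 0 + e.2 0 = 1) (hx₀ : x.1 0 + x.2 0 = 0) (hy₀ : y.1 0 + y.2 0 = 0) (a : R) :
    IsUnit (1 + a • (sus R n x.1 x.2 * sus R n e.1 e.2)) ∧
    IsUnit (1 + sus R n e.1 e.2 * sus R n y.1 y.2) ∧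
    1 + a • (sus R n x.1 x.2 * sus R n y.1 y.2) =
      (1 + a • (sus R n x.1 x.2 * sus R n e.1 e.2)) * (1 + sus R n e.1 e.2 * sus R n y.1 y.2) *
        (1 + a • (sus R n x.1 x.2 * sus R n e.1 e.2))⁻¹ *
        (1 + sus R n e.1 e.2 * sus R n y.1 y.2)⁻¹ := by
  have sq_eq {z} (hz : z ∈ W) :
      sus R n z.1 z.2 * sus R n z.1 z.2 = (z.1 0 + z.2 0) • sus R n z.1 z.2 := by
    rw [sus_mul_self, hW z hz, zero_smul, sub_zero]
  have half {z} (hz : z ∈ W) (hz₀ : z.1 0 + z.2 0 = 0) :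
      IsPeirceHalf (sus R n e.1 e.2) (sus R n z.1 z.2) := by
    rw [IsPeirceHalf, sus_mul_sus_add_swap_of_isotropic hW he hz, he₀, hz₀, one_smul, zero_smul,
      add_zero]
  have idem : IsIdempotentElem (sus R n e.1 e.2) := by
    rw [IsIdempotentElem, sq_eq he, he₀, one_smul]
  have hxx : sus R n x.1 x.2 * sus R n x.1 x.2 = 0 := by rw [sq_eq hx, hx₀, zero_smul]
  have hyy : sus R n y.1 y.2 * sus R n y.1 y.2 = 0 := by rw [sq_eq hy, hy₀, zero_smul]
  have hxy : sus R n x.1 x.2 * sus R n y.1 y.2 + sus R n y.1 y.2 * sus R n x.1 x.2 = 0 := by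
    rw [sus_mul_sus_add_swap_of_isotropic hW hx hy, hx₀, hy₀, zero_smul, zero_smul, add_zero]
  have hax := (half hx hx₀).smul a
  have isUnit_x := hax.isUnit_one_add_mul_right idem
  have isUnit_y := (half hy hy₀).isUnit_one_add_mul_left idem
  simp only [← smul_mul_assoc]
  exact ⟨isUnit_x, isUnit_y, eq_mul_mul_inv_mul_inv_of_mul_mul_eq isUnit_x isUnit_y
    (hax.one_add_mul_commutator idem (half hy hy₀) (by simp [hxx]) hyy
      (by rw [smul_mul_assoc, mul_smul_comm, ← smul_add, hxy, smul_zero]))⟩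

end Suslin

theorem epin_commutator_relations_general (R : Type) [CommRing R] (m : ℕ) (a : R)
    (i j : Fin (m + 1)) (hi : i ≠ 0) (hj : j ≠ 0) :
    IsUnit (1 + a • (Emat R m i * Emat R m 0)) ∧
    IsUnit (1 + Emat R m 0 * Emat R m j) ∧
    IsUnit (1 + a • (Fmat R m i * Fmat R m 0)) ∧
    IsUnit (1 + Fmat R m 0 * Fmat R m j) ∧
    1 + a • (Emat R m i * Emat R m j) =
      (1 + a • (Emat R m i * Emat R m 0)) * (1 + Emat R m 0 * Emat R m j) *
        (1 + a • (Emat R m i * Emat R m 0))⁻¹ * (1 + Emat R m 0 * Emat R m j)⁻¹ ∧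
    1 + a • (Fmat R m i * Fmat R m j) =
      (1 + a • (Fmat R m i * Fmat R m 0)) * (1 + Fmat R m 0 * Fmat R m j) *
        (1 + a • (Fmat R m i * Fmat R m 0))⁻¹ * (1 + Fmat R m 0 * Fmat R m j)⁻¹ := by
  have isotropic_left : ∀ z ∈ AddSubgroup.prod (⊤ : AddSubgroup (Fin (m + 1) → R))
      (⊥ : AddSubgroup (Fin (m + 1) → R)), z.1 ⬝ᵥ z.2 = 0 := by
    simp +contextual [AddSubgroup.mem_prod]
  have isotropic_right : ∀ z ∈ AddSubgroup.prod (⊥ : AddSubgroup (Fin (m + 1) → R))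
      (⊤ : AddSubgroup (Fin (m + 1) → R)), z.1 ⬝ᵥ z.2 = 0 := by
    simp +contextual [AddSubgroup.mem_prod]
  obtain ⟨hE₁, hE₂, hE⟩ := sus_commutator_of_isotropic isotropic_left
    (e := (Pi.single 0 1, 0)) (x := (Pi.single i 1, 0)) (y := (Pi.single j 1, 0))
    (by simp [AddSubgroup.mem_prod]) (by simp [AddSubgroup.mem_prod])
    (by simp [AddSubgroup.mem_prod]) (by simp) (by simp [hi.symm]) (by simp [hj.symm]) a
  obtain ⟨hF₁, hF₂, hF⟩ := sus_commutator_of_isotropic isotropic_right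
    (e := (0, Pi.single 0 1)) (x := (0, Pi.single i 1)) (y := (0, Pi.single j 1))
    (by simp [AddSubgroup.mem_prod]) (by simp [AddSubgroup.mem_prod])
    (by simp [AddSubgroup.mem_prod]) (by simp) (by simp [hi.symm]) (by simp [hj.symm]) a
  exact ⟨hE₁, hE₂, hF₁, hF₂, hE, hF⟩

/-- for odd `n ≥ 3` (here `n = m + 1`), `a ∈ R` and indices
`i, j ≠ 1`, `i ≠ j` (1-based; here `i, j ≠ 0`), the matrices `I + a·E_iE_1` and
`I + E_1E_j` are invertible, and
`I + a·E_iE_j = [I + a·E_iE_1, I + E_1E_j]`, `I + a·F_iF_j = [I + a·F_iF_1, I + F_1F_j]`. -/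
theorem epin_commutator_relations (R : Type) [CommRing R] (m : ℕ) (hm : 2 ≤ m)
    (hodd : Odd (m + 1)) (a : R) (i j : Fin (m + 1)) (hi : i ≠ 0) (hj : j ≠ 0)
    (hij : i ≠ j) :
    IsUnit (1 + a • (Emat R m i * Emat R m 0)) ∧
    IsUnit (1 + Emat R m 0 * Emat R m j) ∧
    IsUnit (1 + a • (Fmat R m i * Fmat R m 0)) ∧
    IsUnit (1 + Fmat R m 0 * Fmat R m j) ∧
    1 + a • (Emat R m i * Emat R m j) =
      (1 + a • (Emat R m i * Emat R m 0)) * (1 + Emat R m 0 * Emat R m j) *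
        (1 + a • (Emat R m i * Emat R m 0))⁻¹ * (1 + Emat R m 0 * Emat R m j)⁻¹ ∧
    1 + a • (Fmat R m i * Fmat R m j) =
      (1 + a • (Fmat R m i * Fmat R m 0)) * (1 + Fmat R m 0 * Fmat R m j) *
        (1 + a • (Fmat R m i * Fmat R m 0))⁻¹ * (1 + Fmat R m 0 * Fmat R m j)⁻¹ :=
  epin_commutator_relations_general R m a i j hi hj
end
end
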